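/- arXiv:math/0608486 — 2 statements merged into one kernel-verified Lean document; each statement's English description precedes it below -/
import Mathlib

section
/- Let f, Δ : [-π,π] → ℝ be continuous functions with f(θ) > 0 for all θ ∈ [-π,π]. Then lim_{ε→0} δ_{a/g}(f, f+εΔ)/ε² = (1/2)·g_f(Δ), where g_f(Δ) := ∫ (Δ/f)² dμ − ( ∫ (Δ/f) dμ )²; that is, up to a scaling factor of 2 the quadratic term of the divergence δ_{a/g} between f and the perturbation f+Δ is the Riemannian pseudo-metric g_f(Δ). -/
open MeasureTheory Real Filter Topology

/-- The normalized Lebesgue measure `dθ/(2π)` on `[-π, π]`. -/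
noncomputable def μ : Measure ℝ :=
  (ENNReal.ofReal (2 * Real.pi)⁻¹) • (volume.restrict (Set.Icc (-Real.pi) Real.pi))

/-- The arithmetic/geometric divergence between spectral densities. -/
noncomputable def δag (f₁ f₂ : ℝ → ℝ) : ℝ :=
  Real.log (∫ θ, f₁ θ / f₂ θ ∂μ) - ∫ θ, Real.log (f₁ θ / f₂ θ) ∂μ

/-- The Riemannian pseudo-metric at `f` applied to a perturbation `Δ`. -/
noncomputable def gf (f Δ : ℝ → ℝ) : ℝ :=
  (∫ θ, (Δ θ / f θ) ^ 2 ∂μ) - (∫ θ, Δ θ / f θ ∂μ) ^ 2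

lemma aux_log (x : ℝ) (hx : |x| ≤ 1/2) :
    |Real.log (1 + x) - (0 + 1 * x + (-1/2) * x ^ 2)| ≤ 2 * |x| ^ 3 := by
  have h := Real.abs_log_sub_add_sum_range_le (x := -x) (by rw [abs_neg]; linarith) 2
  simp only [Finset.sum_range_succ, Finset.sum_range_zero, abs_neg, sub_neg_eq_add] at h
  have h2 : |x| ^ 3 / (1 - |x|) ≤ 2 * |x| ^ 3 := by
    rw [div_le_iff₀ (by linarith)]
    have : 0 ≤ |x| ^ 3 := by positivity
    nlinarith
  refine le_trans (le_of_eq ?_) (h.trans h2)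
  congr 1
  push_cast
  ring

lemma aux_inv (x : ℝ) (hx : |x| ≤ 1/2) :
    |(1 + x)⁻¹ - (1 + (-1) * x + 1 * x ^ 2)| ≤ 2 * |x| ^ 3 := by
  have h1 : 1/2 ≤ 1 + x := by linarith [(abs_le.mp hx).1]
  have h0 : (1 + x) ≠ 0 := by linarith
  have : (1 + x)⁻¹ - (1 + (-1) * x + 1 * x ^ 2) = - x ^ 3 / (1 + x) := by
    field_simp
    ring
  rw [this, abs_div, abs_neg, abs_pow, abs_of_pos (show 0 < 1 + x by linarith),
    div_le_iff₀ (by linarith)]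
  have : 0 ≤ |x| ^ 3 := by positivity
  nlinarith

lemma aux_small (M : ℝ) : ∀ᶠ ε : ℝ in 𝓝 0, |ε| * M ≤ 1/2 := by
  have : Tendsto (fun ε : ℝ => |ε| * M) (𝓝 0) (𝓝 0) := by
    have : Continuous (fun ε : ℝ => |ε| * M) := by fun_prop
    simpa using this.tendsto 0
  exact this.eventually_le_const (by norm_num)

lemma aux_int (ν : Measure ℝ) [IsProbabilityMeasure ν] (u : ℝ → ℝ) (M : ℝ)
    (hu : AEMeasurable u ν) (hM : ∀ᵐ θ ∂ν, |u θ| ≤ M) (φ : ℝ → ℝ) (hφ : Measurable φ)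
    (c0 c1 c2 : ℝ)
    (h : ∀ x, |x| ≤ 1/2 → |φ x - (c0 + c1 * x + c2 * x ^ 2)| ≤ 2 * |x| ^ 3) :
    (fun ε : ℝ => (∫ θ, φ (ε * u θ) ∂ν)
      - (c0 + c1 * (ε * ∫ θ, u θ ∂ν) + c2 * (ε ^ 2 * ∫ θ, u θ ^ 2 ∂ν)))
      =O[𝓝 0] (fun ε : ℝ => ε ^ 3) := by
  have i1 : Integrable u ν := Integrable.of_bound hu.aestronglyMeasurable M (by simpa using hM)
  have i2 : Integrable (fun θ => u θ ^ 2) ν := by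
    refine Integrable.of_bound (hu.pow_const 2).aestronglyMeasurable (M ^ 2) ?_
    filter_upwards [hM] with θ hθ
    rw [Real.norm_eq_abs, abs_pow]
    gcongr
  refine Asymptotics.IsBigO.of_bound (2 * M ^ 3) ?_
  filter_upwards [aux_small M] with ε hε
  have ip : Integrable (fun θ => c0 + c1 * (ε * u θ) + c2 * (ε ^ 2 * u θ ^ 2)) ν :=
    ((integrable_const c0).add ((i1.const_mul ε).const_mul c1)).add
      ((i2.const_mul _).const_mul c2)
  have bd : ∀ᵐ θ ∂ν, ‖φ (ε * u θ) - (c0 + c1 * (ε * u θ) + c2 * (ε ^ 2 * u θ ^ 2))‖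
      ≤ 2 * M ^ 3 * ‖ε ^ 3‖ := by
    filter_upwards [hM] with θ hθ
    have h1 : |ε * u θ| ≤ |ε| * M := by rw [abs_mul]; gcongr
    have h2 := h _ (h1.trans hε)
    rw [mul_pow] at h2
    rw [Real.norm_eq_abs, Real.norm_eq_abs, abs_pow]
    calc _ ≤ _ := h2
      _ ≤ 2 * (|ε| * M) ^ 3 := by gcongr
      _ = _ := by ring
  have id : Integrable
      (fun θ => φ (ε * u θ) - (c0 + c1 * (ε * u θ) + c2 * (ε ^ 2 * u θ ^ 2))) ν :=
    Integrable.of_bound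
      ((hφ.comp_aemeasurable (hu.const_mul ε)).aestronglyMeasurable.sub ip.1) _ bd
  have iφ : Integrable (fun θ => φ (ε * u θ)) ν := by
    refine (id.add ip).congr (Eventually.of_forall fun θ => ?_)
    simp
  have e : (∫ θ, φ (ε * u θ) ∂ν)
      - (c0 + c1 * (ε * ∫ θ, u θ ∂ν) + c2 * (ε ^ 2 * ∫ θ, u θ ^ 2 ∂ν))
      = ∫ θ, (φ (ε * u θ) - (c0 + c1 * (ε * u θ) + c2 * (ε ^ 2 * u θ ^ 2))) ∂ν := by
    have i01 : Integrable (fun θ => c0 + c1 * (ε * u θ)) ν :=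
      (integrable_const c0).add ((i1.const_mul ε).const_mul c1)
    rw [integral_sub iφ ip, integral_add i01
      ((i2.const_mul _).const_mul c2),
      integral_add (integrable_const c0) ((i1.const_mul ε).const_mul c1)]
    simp [integral_const_mul]
  rw [e]
  simpa using norm_integral_le_of_norm_le_const bd

lemma aux_main (ν : Measure ℝ) [IsProbabilityMeasure ν] (u : ℝ → ℝ) (M : ℝ)
    (hu : AEMeasurable u ν) (hM : ∀ᵐ θ ∂ν, |u θ| ≤ M) :
    Tendsto (fun ε : ℝ => (Real.log (∫ θ, (1 + ε * u θ)⁻¹ ∂ν)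
        + ∫ θ, Real.log (1 + ε * u θ) ∂ν) / ε ^ 2) (𝓝[≠] 0)
      (𝓝 ((1 / 2) * ((∫ θ, u θ ^ 2 ∂ν) - (∫ θ, u θ ∂ν) ^ 2))) := by
  have H1 := aux_int ν u M hu hM (fun x => (1 + x)⁻¹) (by fun_prop) 1 (-1) 1 aux_inv
  have H2 := aux_int ν u M hu hM (fun x => Real.log (1 + x)) (by fun_prop) 0 1 (-1/2) aux_log
  set a := ∫ θ, u θ ∂ν
  set b := ∫ θ, u θ ^ 2 ∂ν
  set A : ℝ → ℝ := fun ε => ∫ θ, (1 + ε * u θ)⁻¹ ∂ν with hA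
  set L : ℝ → ℝ := fun ε => ∫ θ, Real.log (1 + ε * u θ) ∂ν with hL
  set R : ℝ → ℝ := fun ε => A ε - (1 + (-1) * (ε * a) + 1 * (ε ^ 2 * b)) with hR
  have pw : ∀ m n : ℕ, n ≤ m → (fun ε : ℝ => ε ^ m) =O[𝓝 0] (fun ε : ℝ => ε ^ n) := by
    intro m n hmn
    rcases hmn.eq_or_lt with h | h
    · rw [h]
    · exact (Asymptotics.isLittleO_pow_pow h).isBigO
  have R2 : R =O[𝓝 0] (fun ε : ℝ => ε ^ 2) := H1.trans (pw 3 2 (by norm_num))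
  -- A - 1 + ε a = O(ε ^ 2)
  have Y2 : (fun ε => A ε - 1 + ε * a) =O[𝓝 0] (fun ε : ℝ => ε ^ 2) := by
    have : (fun ε => A ε - 1 + ε * a) = fun ε => R ε + b * ε ^ 2 := by
      funext ε; simp only [hR]; ring
    rw [this]
    exact R2.add (Asymptotics.isBigO_const_mul_self b _ _)
  have lin : (fun ε : ℝ => ε * a) =O[𝓝 0] (fun ε : ℝ => ε ^ 1) := by
    simpa [mul_comm] using Asymptotics.isBigO_const_mul_self a (fun ε : ℝ => ε) (𝓝 0)
  have Y1 : (fun ε => A ε - 1) =O[𝓝 0] (fun ε : ℝ => ε ^ 1) := by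
    have : (fun ε => A ε - 1) = fun ε => (A ε - 1 + ε * a) - ε * a := by
      funext ε; ring
    rw [this]
    exact (Y2.trans (pw 2 1 (by norm_num))).sub lin
  have Y0 : Tendsto (fun ε => A ε - 1) (𝓝 0) (𝓝 0) := by
    refine Y1.trans_tendsto ?_
    simp only [pow_one]
    exact tendsto_id
  have SQ : (fun ε => (A ε - 1) ^ 2 - (ε * a) ^ 2) =O[𝓝 0] (fun ε : ℝ => ε ^ 3) := by
    have := Y2.mul (Y1.sub lin)
    refine this.congr (fun ε => ?_) (fun ε => ?_) <;> ring
  have LG : (fun ε => Real.log (A ε) - (0 + 1 * (A ε - 1) + (-1/2) * (A ε - 1) ^ 2))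
      =O[𝓝 0] (fun ε : ℝ => ε ^ 3) := by
    have h3 : (fun ε => (A ε - 1) ^ 3) =O[𝓝 0] (fun ε : ℝ => ε ^ 3) := by
      simpa using Y1.pow 3
    refine Asymptotics.IsBigO.trans ?_ h3
    refine Asymptotics.IsBigO.of_bound 2 ?_
    have : ∀ᶠ ε in 𝓝 0, |A ε - 1| ≤ 1/2 := by
      have h4 := Y0.abs
      rw [abs_zero] at h4
      exact h4.eventually_le_const (by norm_num)
    filter_upwards [this] with ε hε
    have := aux_log _ hε
    rw [add_sub_cancel] at this
    simpa only [Real.norm_eq_abs, abs_pow] using this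
  have TOT : (fun ε => Real.log (A ε) + L ε - ε ^ 2 * ((1/2) * (b - a ^ 2)))
      =O[𝓝 0] (fun ε : ℝ => ε ^ 3) := by
    have := ((LG.add H1).add H2).sub (SQ.const_mul_left (1/2))
    refine this.congr_left (fun ε => ?_)
    simp only [hL]
    ring
  have LO : (fun ε => Real.log (A ε) + L ε - ε ^ 2 * ((1/2) * (b - a ^ 2)))
      =o[𝓝 0] (fun ε : ℝ => ε ^ 2) :=
    TOT.trans_isLittleO (Asymptotics.isLittleO_pow_pow (by norm_num))
  have T := (LO.tendsto_div_nhds_zero.mono_left (nhdsWithin_le_nhds (s := {0}ᶜ))).add_const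
    ((1/2) * (b - a ^ 2))
  rw [zero_add] at T
  refine T.congr' ?_
  filter_upwards [self_mem_nhdsWithin] with ε hε
  have : ε ≠ 0 := hε
  change _ = (Real.log (A ε) + L ε) / ε ^ 2
  field_simp
  ring

lemma aux_prob : IsProbabilityMeasure μ := by
  constructor
  have := Real.pi_pos
  simp only [μ, Measure.smul_apply, Measure.restrict_apply_univ, Real.volume_Icc, smul_eq_mul]
  rw [← ENNReal.ofReal_mul (by positivity), ← ENNReal.ofReal_one]
  congr 1
  field_simp
  ring

lemma aux_ae : ∀ᵐ θ ∂μ, θ ∈ Set.Icc (-Real.pi) Real.pi :=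
  Measure.ae_smul_measure (ae_restrict_mem measurableSet_Icc) _

theorem δag_quadratic_term (f Δ : ℝ → ℝ)
    (hf : Continuous f) (hΔ : Continuous Δ)
    (hfpos : ∀ θ ∈ Set.Icc (-Real.pi) Real.pi, 0 < f θ) :
    Tendsto (fun ε : ℝ => δag f (fun θ => f θ + ε * Δ θ) / ε ^ 2)
      (𝓝[≠] 0) (𝓝 ((1 / 2) * gf f Δ)) := by
  have := aux_prob
  obtain ⟨M, hM⟩ := isCompact_Icc.exists_bound_of_continuousOn
    (f := fun θ => Δ θ / f θ) (s := Set.Icc (-Real.pi) Real.pi)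
    (hΔ.continuousOn.div hf.continuousOn (fun θ hθ => (hfpos θ hθ).ne'))
  have T := aux_main μ (fun θ => Δ θ / f θ) M (hΔ.measurable.div hf.measurable).aemeasurable
    (by filter_upwards [aux_ae] with θ hθ using hM θ hθ)
  refine T.congr' ?_
  refine Eventually.filter_mono nhdsWithin_le_nhds ?_
  filter_upwards [aux_small M] with ε hε
  have key : ∀ᵐ θ ∂μ, f θ / (f θ + ε * Δ θ) = (1 + ε * (Δ θ / f θ))⁻¹ := by
    filter_upwards [aux_ae] with θ hθ
    have h1 := hfpos θ hθ
    have h2 : f θ + ε * Δ θ = f θ * (1 + ε * (Δ θ / f θ)) := by field_simp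
    rw [h2, div_mul_eq_div_div, div_self h1.ne', one_div]
  simp only [δag]
  rw [integral_congr_ae key]
  have key2 : ∀ᵐ θ ∂μ, Real.log (f θ / (f θ + ε * Δ θ))
      = - Real.log (1 + ε * (Δ θ / f θ)) := by
    filter_upwards [key] with θ hθ
    rw [hθ, Real.log_inv]
  rw [integral_congr_ae key2, integral_neg, sub_neg_eq_add]
end

section
/- Let r, s be nonzero real numbers with r ≠ s, and let f, Δ : [-π,π] → ℝ be continuous functions with f(θ) > 0 for all θ ∈ [-π,π]. Define δ_{r,s}(f₁,f₂) := (1/r)·log( ∫ (f₁/f₂)^r dμ ) − (1/s)·log( ∫ (f₁/f₂)^s dμ ). Then lim_{ε→0} δ_{r,s}(f, f+εΔ)/ε² = ((r−s)/2)·g_f(Δ), where g_f(Δ) := ∫ (Δ/f)² dμ − ( ∫ (Δ/f) dμ )²; that is, the quadratic term of δ_{r,s}(f, f+Δ) in the perturbation Δ is, modulo a scaling factor, the same Riemannian pseudo-metric g_f(Δ) as arises from δ_{a/g}. -/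
open MeasureTheory Real Filter Topology

/-- The divergence comparing generalized means of order `r` and `s`. -/
noncomputable def δrs (r s : ℝ) (f₁ f₂ : ℝ → ℝ) : ℝ :=
  (1 / r) * Real.log (∫ θ, (f₁ θ / f₂ θ) ^ r ∂μ) -
    (1 / s) * Real.log (∫ θ, (f₁ θ / f₂ θ) ^ s ∂μ)

lemma aux_taylor (g g' : ℝ → ℝ) (c : ℝ) (h1 : ∀ᶠ u in 𝓝 (0:ℝ), HasDerivAt g (g' u) u)
    (h2 : HasDerivAt g' c 0) :
    ∃ Φ : ℝ → ℝ, Φ 0 = c / 2 ∧ ContinuousAt Φ 0 ∧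
      ∀ u, g u = g 0 + g' 0 * u + Φ u * u ^ 2 := by
  have key : Tendsto (fun u => (g u - g 0 - g' 0 * u) / u ^ 2) (𝓝[≠] 0) (𝓝 (c / 2)) := by
    have h1' : ∀ᶠ u in 𝓝[≠] (0:ℝ), HasDerivAt g (g' u) u := h1.filter_mono nhdsWithin_le_nhds
    have hg : ContinuousAt g 0 := h1.self_of_nhds.continuousAt
    refine HasDerivAt.lhopital_zero_nhdsNE (f' := fun u => g' u - g' 0) (g' := fun u => 2 * u)
      ?_ ?_ ?_ ?_ ?_ ?_
    · filter_upwards [h1'] with u hu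
      have := (hu.sub_const (g 0)).sub ((hasDerivAt_id u).const_mul (g' 0))
      rw [mul_one] at this
      exact this
    · filter_upwards with u
      simpa using hasDerivAt_pow 2 u
    · filter_upwards [self_mem_nhdsWithin] with u hu
      simpa using hu
    · have : ContinuousAt (fun u => g u - g 0 - g' 0 * u) 0 := by fun_prop
      have := this.tendsto
      simp at this
      exact this.mono_left nhdsWithin_le_nhds
    · have : ContinuousAt (fun u : ℝ => u ^ 2) 0 := by fun_prop
      have := this.tendsto
      simp at this
      exact this.mono_left nhdsWithin_le_nhds
    · have := (hasDerivAt_iff_tendsto_slope.1 h2).div_const 2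
      refine this.congr' ?_
      filter_upwards [self_mem_nhdsWithin] with u hu
      simp [slope_def_field]
      field_simp
  refine ⟨Function.update (fun u => (g u - g 0 - g' 0 * u) / u ^ 2) 0 (c / 2), by simp,
    continuousAt_update_same.2 key, fun u => ?_⟩
  by_cases hu : u = 0
  · simp [hu]
  · simp [Function.update_of_ne hu]
    field_simp
    ring

lemma aux_rpow (r : ℝ) : ∃ Φ : ℝ → ℝ, Φ 0 = r * (r + 1) / 2 ∧ ContinuousAt Φ 0 ∧
    ∀ u, (1 + u) ^ (-r) = 1 - r * u + Φ u * u ^ 2 := by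
  have hd : ∀ p u : ℝ, 0 < 1 + u →
      HasDerivAt (fun u : ℝ => (1 + u) ^ p) (p * (1 + u) ^ (p - 1)) u := by
    intro p u hu
    have := ((hasDerivAt_id u).const_add 1).rpow_const (p := p) (Or.inl hu.ne')
    simpa using this
  obtain ⟨Φ, h0, hc, h⟩ := aux_taylor (fun u : ℝ => (1 + u) ^ (-r))
    (fun u => -r * (1 + u) ^ (-r - 1)) (r * (r + 1)) (by
      filter_upwards [lt_mem_nhds (show (-1:ℝ) < 0 by norm_num)] with u hu
      exact hd _ _ (by linarith)) (by
      have := (hd (-r - 1) 0 (by norm_num)).const_mul (-r)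
      refine this.congr_deriv ?_
      simp
      ring)
  refine ⟨Φ, h0, hc, fun u => ?_⟩
  have := h u
  simp at this
  rw [this]; ring

lemma aux_log_s13 : ∃ Φ : ℝ → ℝ, Φ 0 = -1 / 2 ∧ ContinuousAt Φ 0 ∧
    ∀ u, Real.log (1 + u) = u + Φ u * u ^ 2 := by
  obtain ⟨Φ, h0, hc, h⟩ := aux_taylor (fun u : ℝ => Real.log (1 + u))
    (fun u => (1 + u)⁻¹) (-1) (by
      filter_upwards [lt_mem_nhds (show (-1:ℝ) < 0 by norm_num)] with u hu
      have := ((hasDerivAt_id u).const_add 1).log (by simp; linarith)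
      simpa using this) (by
      have := ((hasDerivAt_id (0:ℝ)).const_add 1).inv (by simp)
      refine this.congr_deriv ?_
      simp)
  refine ⟨Φ, h0, hc, fun u => ?_⟩
  have := h u
  simpa using this

instance : IsProbabilityMeasure μ := ⟨by
  have := Real.pi_pos
  simp only [μ, Measure.smul_apply, Measure.restrict_apply_univ, Real.volume_Icc, smul_eq_mul]
  rw [← ENNReal.ofReal_mul (by positivity)]
  rw [show (2 * π)⁻¹ * (π - -π) = 1 by field_simp; ring]
  simp⟩

lemma aux_main_s13 (r : ℝ) (hr : r ≠ 0)
    (f Δ : ℝ → ℝ) (hf : Continuous f) (hΔ : Continuous Δ)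
    (hfpos : ∀ θ ∈ Set.Icc (-Real.pi) Real.pi, 0 < f θ) :
    Tendsto (fun ε : ℝ => ((1 / r) * Real.log (∫ θ, (f θ / (f θ + ε * Δ θ)) ^ r ∂μ)
        + ε * ∫ θ, Δ θ / f θ ∂μ) / ε ^ 2)
      (𝓝[≠] 0) (𝓝 ((r + 1) / 2 * (∫ θ, (Δ θ / f θ) ^ 2 ∂μ)
        - r / 2 * (∫ θ, Δ θ / f θ ∂μ) ^ 2)) := by
  obtain ⟨Φ, hΦ0, hΦc, hΦ⟩ := aux_rpow r
  obtain ⟨Ψ, hΨ0, hΨc, hΨ⟩ := aux_log_s13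
  set x : ℝ → ℝ := fun θ => Δ θ / f θ with hx
  have hxm : Measurable x := hΔ.measurable.div hf.measurable
  obtain ⟨M, hM⟩ : ∃ M, ∀ θ ∈ Set.Icc (-Real.pi) Real.pi, ‖x θ‖ ≤ M :=
    isCompact_Icc.exists_bound_of_continuousOn
      (hΔ.continuousOn.div hf.continuousOn (fun θ h => (hfpos θ h).ne'))
  have hM0 : 0 ≤ M := (norm_nonneg _).trans (hM 0 ⟨by linarith [pi_pos], pi_pos.le⟩)
  have hxi : Integrable x μ := Integrable.of_bound hxm.aestronglyMeasurable M (by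
    filter_upwards [aux_ae] with θ h using hM θ h)
  set m := ∫ θ, x θ ∂μ
  set q := ∫ θ, (x θ) ^ 2 ∂μ
  -- uniform smallness
  have small : ∀ η > 0, ∀ᶠ ε in 𝓝 (0:ℝ), ∀ θ ∈ Set.Icc (-Real.pi) Real.pi, |ε * x θ| < η := by
    intro η hη
    have : ∀ᶠ ε in 𝓝 (0:ℝ), |ε| * M < η := by
      have hc : ContinuousAt (fun ε : ℝ => |ε| * M) 0 := by fun_prop
      exact hc.eventually_lt continuousAt_const (by simpa using hη)
    filter_upwards [this] with ε h θ hθ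
    rw [abs_mul]
    exact (mul_le_mul_of_nonneg_left (hM θ hθ) (abs_nonneg _)).trans_lt h
  let F : ℝ → ℝ → ℝ := fun ε θ => ((1 + ε * x θ) ^ (-r) - 1 + r * (ε * x θ)) / ε ^ 2
  have hFm : ∀ ε, Measurable (F ε) := fun ε => by
    simp only [F]; fun_prop
  have hF : ∀ ε ≠ 0, ∀ θ, F ε θ = Φ (ε * x θ) * x θ ^ 2 := by
    intro ε hε θ
    simp only [F, hΦ]
    field_simp
    ring
  obtain ⟨η, hη, hΦb⟩ : ∃ η > 0, ∀ u : ℝ, |u| < η → |Φ u| ≤ |Φ 0| + 1 := by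
    have := Metric.continuousAt_iff.1 hΦc 1 one_pos
    obtain ⟨η, hη, h⟩ := this
    refine ⟨η, hη, fun u hu => ?_⟩
    have := h (x := u) (by simpa [Real.dist_eq] using hu)
    rw [Real.dist_eq] at this
    have := abs_sub_abs_le_abs_sub (Φ u) (Φ 0)
    linarith
  have ne : ∀ᶠ ε in 𝓝[≠] (0:ℝ), ε ≠ 0 := self_mem_nhdsWithin
  have hFb : ∀ᶠ ε in 𝓝[≠] (0:ℝ), ∀ᵐ θ ∂μ, ‖F ε θ‖ ≤ (|Φ 0| + 1) * M ^ 2 := by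
    filter_upwards [ne, (small η hη).filter_mono nhdsWithin_le_nhds] with ε hε hs
    filter_upwards [aux_ae] with θ hθ
    rw [hF ε hε, norm_mul, norm_pow]
    exact mul_le_mul (hΦb _ (hs θ hθ)) (pow_le_pow_left₀ (norm_nonneg _) (hM θ hθ) 2)
      (by positivity) (by positivity)
  have hJ : Tendsto (fun ε => ∫ θ, F ε θ ∂μ) (𝓝[≠] 0) (𝓝 (Φ 0 * q)) := by
    rw [show Φ 0 * q = ∫ θ, Φ 0 * x θ ^ 2 ∂μ from (integral_const_mul _ _).symm]
    refine tendsto_integral_filter_of_dominated_convergence (fun _ => (|Φ 0| + 1) * M ^ 2)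
      (Eventually.of_forall fun ε => (hFm ε).aestronglyMeasurable) hFb (integrable_const _) ?_
    filter_upwards with θ
    have h1 : Tendsto (fun ε : ℝ => ε * x θ) (𝓝[≠] 0) (𝓝 0) := by
      have : ContinuousAt (fun ε : ℝ => ε * x θ) 0 := by fun_prop
      have := this.tendsto
      simp at this
      exact this.mono_left nhdsWithin_le_nhds
    refine ((hΦc.tendsto.comp h1).mul_const _).congr' ?_
    filter_upwards [ne] with ε hε
    rw [hF ε hε]; rfl
  have hid : Tendsto (fun ε : ℝ => ε) (𝓝[≠] 0) (𝓝 0) := tendsto_id.mono_left nhdsWithin_le_nhds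
  set J := fun ε => ∫ θ, F ε θ ∂μ
  have hI : ∀ᶠ ε in 𝓝[≠] (0:ℝ), ∫ θ, (f θ / (f θ + ε * Δ θ)) ^ r ∂μ
      = 1 + ε * (-r * m + ε * J ε) := by
    filter_upwards [ne, (small 1 one_pos).filter_mono nhdsWithin_le_nhds, hFb] with ε hε hs hb
    have hFi : Integrable (F ε) μ := Integrable.of_bound (hFm ε).aestronglyMeasurable _ hb
    have : ∫ θ, (f θ / (f θ + ε * Δ θ)) ^ r ∂μ
        = ∫ θ, ((1 + (-r * ε) * x θ) + ε ^ 2 * F ε θ) ∂μ := by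
      refine integral_congr_ae ?_
      filter_upwards [aux_ae] with θ hθ
      have hp := hfpos θ hθ
      have h1 : 0 < 1 + ε * x θ := by linarith [(abs_lt.1 (hs θ hθ)).1]
      have h2 : f θ / (f θ + ε * Δ θ) = (1 + ε * x θ)⁻¹ := by
        have : f θ + ε * Δ θ = f θ * (1 + ε * x θ) := by simp only [hx]; field_simp
        rw [this]; field_simp
      simp only [h2, F]
      rw [Real.inv_rpow h1.le, ← Real.rpow_neg h1.le]
      field_simp
      ring
    rw [this, integral_add (by fun_prop) (by fun_prop), integral_add (by fun_prop) (by fun_prop),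
      integral_const_mul, integral_const_mul]
    simp [J, m]
    ring
  have hw : Tendsto (fun ε => -r * m + ε * J ε) (𝓝[≠] 0) (𝓝 (-r * m)) := by
    simpa using (hid.mul hJ).const_add (-r * m)
  have hv : Tendsto (fun ε => ε * (-r * m + ε * J ε)) (𝓝[≠] 0) (𝓝 0) := by
    simpa using hid.mul hw
  have hlim := (hJ.add ((hΨc.tendsto.comp hv).mul (hw.pow 2))).const_mul (1 / r)
  have e : 1 / r * (Φ 0 * q + Ψ 0 * (-r * m) ^ 2) = (r + 1) / 2 * q - r / 2 * m ^ 2 := by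
    rw [hΦ0, hΨ0]; field_simp; ring
  rw [e] at hlim
  refine hlim.congr' ?_
  filter_upwards [ne, hI] with ε hε hI
  rw [hI, hΨ]
  simp only [Function.comp]
  field_simp
  ring

theorem δrs_quadratic_term (r s : ℝ) (hr : r ≠ 0) (hs : s ≠ 0) (hrs : r ≠ s)
    (f Δ : ℝ → ℝ) (hf : Continuous f) (hΔ : Continuous Δ)
    (hfpos : ∀ θ ∈ Set.Icc (-Real.pi) Real.pi, 0 < f θ) :
    Tendsto (fun ε : ℝ => δrs r s f (fun θ => f θ + ε * Δ θ) / ε ^ 2)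
      (𝓝[≠] 0) (𝓝 (((r - s) / 2) * gf f Δ)) := by
  have h := (aux_main_s13 r hr f Δ hf hΔ hfpos).sub (aux_main_s13 s hs f Δ hf hΔ hfpos)
  have e : ∀ q m : ℝ, ((r + 1) / 2 * q - r / 2 * m ^ 2) - ((s + 1) / 2 * q - s / 2 * m ^ 2)
    = (r - s) / 2 * (q - m ^ 2) := by intros; ring
  rw [e] at h
  refine h.congr fun ε => ?_
  simp only [δrs]
  ring
end
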